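/- For all ε > 0 and Δ > 0, V* = inf_{μ ∈ ⋃_{i≥3} 𝒫_i^{(c)}} V(μ); that is, in minimizing the expected ℓ¹ cost one may restrict to measures in 𝒫_i^{(b)} whose density sequence additionally satisfies a₀ = e^ε · a_{i−1} and a₀ = a₁ = ⋯ = a_k for some integer 0 ≤ k ≤ i−2. (Lemma 7.) -/

import Mathlib

open MeasureTheory Real Filter
open scoped ENNReal Topology

noncomputable section

/-- The ℓ¹ norm on ℝ². -/
def l1 (x : ℝ × ℝ) : ℝ := |x.1| + |x.2|

/-- The ε-differential-privacy constraint on a measure on ℝ² with sensitivity Δ. -/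
def DPC (ε Δ : ℝ) (μ : Measure (ℝ × ℝ)) : Prop :=
  ∀ S : Set (ℝ × ℝ), MeasurableSet S → ∀ t : ℝ × ℝ, l1 t ≤ Δ →
    μ S ≤ ENNReal.ofReal (Real.exp ε) * μ ((· + t) '' S)

/-- Expected ℓ¹ cost of a noise distribution. -/
def cost (μ : Measure (ℝ × ℝ)) : ℝ≥0∞ := ∫⁻ x, ENNReal.ofReal (l1 x) ∂μ

/-- The index k of the ℓ¹ layer A_i(k) = {x : kΔ/i ≤ ‖x‖₁ < (k+1)Δ/i} containing x. -/
def layerIdx (Δ : ℝ) (i : ℕ) (x : ℝ × ℝ) : ℕ := ⌊l1 x * i / Δ⌋₊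

/-- μ has a density w.r.t. Lebesgue measure which is constant on each ℓ¹ layer
A_i(k), with constant value a_k on A_i(k); (a_k) is the density sequence of μ. -/
def HasDensitySeq (Δ : ℝ) (i : ℕ) (μ : Measure (ℝ × ℝ)) (a : ℕ → ℝ≥0∞) : Prop :=
  μ = MeasureTheory.volume.withDensity (fun x => a (layerIdx Δ i x))

/-- Membership in 𝒫: probability measures satisfying the ε-DP constraint. -/
def MemP (ε Δ : ℝ) (μ : Measure (ℝ × ℝ)) : Prop :=
  IsProbabilityMeasure μ ∧ DPC ε Δ μ

/-- Membership in 𝒫_{i,sym}: members of 𝒫 with layer-constant density. -/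
def MemPsym (ε Δ : ℝ) (i : ℕ) (μ : Measure (ℝ × ℝ)) : Prop :=
  MemP ε Δ μ ∧ ∃ a : ℕ → ℝ≥0∞, HasDensitySeq Δ i μ a

/-- Membership in 𝒫_i^{(a)}: layer-constant density with nonincreasing density sequence. -/
def MemPa (ε Δ : ℝ) (i : ℕ) (μ : Measure (ℝ × ℝ)) : Prop :=
  MemP ε Δ μ ∧ ∃ a : ℕ → ℝ≥0∞, HasDensitySeq Δ i μ a ∧ Antitone a

/-- Membership in 𝒫_i^{(b)}: additionally the density sequence decays geometrically,
a_k = e^ε · a_{k+i} for all k. -/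
def MemPb (ε Δ : ℝ) (i : ℕ) (μ : Measure (ℝ × ℝ)) : Prop :=
  MemP ε Δ μ ∧ ∃ a : ℕ → ℝ≥0∞, HasDensitySeq Δ i μ a ∧ Antitone a ∧
    ∀ k : ℕ, a k = ENNReal.ofReal (Real.exp ε) * a (k + i)

/-- Membership in 𝒫_i^{(c)}: additionally a₀ = e^ε · a_{i−1} and
a₀ = a₁ = ⋯ = a_k for some 0 ≤ k ≤ i−2. -/
def MemPc (ε Δ : ℝ) (i : ℕ) (μ : Measure (ℝ × ℝ)) : Prop :=
  MemP ε Δ μ ∧ ∃ a : ℕ → ℝ≥0∞, HasDensitySeq Δ i μ a ∧ Antitone a ∧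
    (∀ k : ℕ, a k = ENNReal.ofReal (Real.exp ε) * a (k + i)) ∧
    a 0 = ENNReal.ofReal (Real.exp ε) * a (i - 1) ∧
    ∃ k : ℕ, k ≤ i - 2 ∧ ∀ j : ℕ, j ≤ k → a j = a 0

/-- Membership in 𝒫_i^{(d)}: members of 𝒫_i^{(c)} whose density sequence takes only
the two values a₀ and a_{i−1} on each period: for some 1 ≤ k ≤ i−2, a_j = a₀ for
0 ≤ j < k and a_j = a_{i−1} for k < j ≤ i−1. -/
def MemPd (ε Δ : ℝ) (i : ℕ) (μ : Measure (ℝ × ℝ)) : Prop :=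
  MemP ε Δ μ ∧ ∃ a : ℕ → ℝ≥0∞, HasDensitySeq Δ i μ a ∧ Antitone a ∧
    (∀ k : ℕ, a k = ENNReal.ofReal (Real.exp ε) * a (k + i)) ∧
    a 0 = ENNReal.ofReal (Real.exp ε) * a (i - 1) ∧
    (∃ k : ℕ, k ≤ i - 2 ∧ ∀ j : ℕ, j ≤ k → a j = a 0) ∧
    ∃ k : ℕ, 1 ≤ k ∧ k ≤ i - 2 ∧ (∀ j : ℕ, j < k → a j = a 0) ∧
      ∀ j : ℕ, k < j → j ≤ i - 1 → a j = a (i - 1)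

open Set in
/-- Polar coordinates for the ℓ¹ norm. -/
theorem polar_l1 : ∃ (Ω : Type) (_ : MeasurableSpace Ω) (σ : Measure Ω) (u : Ω → ℝ × ℝ)
    (ρ : Measure ℝ), IsFiniteMeasure σ ∧ σ ≠ 0 ∧ Measurable u ∧ (∀ ω, l1 (u ω) = 1) ∧
    SFinite ρ ∧ ρ (Iic 0) = 0 ∧ (∀ x, ρ (Iio x) ≠ ∞) ∧ ρ ≪ volume ∧
    ∀ F : ℝ × ℝ → ℝ≥0∞, Measurable F →
      ∫⁻ x, F x = ∫⁻ ω, ∫⁻ r, F (r • u ω) ∂ρ ∂σ := by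
  let e : (ℝ × ℝ) ≃L[ℝ] WithLp 1 (ℝ × ℝ) := (WithLp.prodContinuousLinearEquiv 1 ℝ ℝ ℝ).symm
  let _ : MeasurableSpace (WithLp 1 (ℝ × ℝ)) := borel _
  have : BorelSpace (WithLp 1 (ℝ × ℝ)) := ⟨rfl⟩
  have : FiniteDimensional ℝ (WithLp 1 (ℝ × ℝ)) := e.toLinearEquiv.finiteDimensional
  have : Nontrivial (WithLp 1 (ℝ × ℝ)) := e.symm.toEquiv.nontrivial
  have hdim : Module.finrank ℝ (WithLp 1 (ℝ × ℝ)) = 2 := by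
    rw [← e.toLinearEquiv.finrank_eq]; simp
  let ν : Measure (WithLp 1 (ℝ × ℝ)) := (volume : Measure (ℝ × ℝ)).map e
  have : ν.IsAddHaarMeasure := e.isAddHaarMeasure_map _
  have hem : Measurable e := e.continuous.measurable
  have hes : Measurable e.symm := e.symm.continuous.measurable
  have hl1 : ∀ x : WithLp 1 (ℝ × ℝ), l1 (e.symm x) = ‖x‖ := by
    intro x
    rw [WithLp.prod_norm_eq_of_L1]
    rfl
  have hpres := ν.measurePreserving_homeomorphUnitSphereProd
  rw [hdim] at hpres
  refine ⟨Metric.sphere (0 : WithLp 1 (ℝ × ℝ)) 1, inferInstance, ν.toSphere,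
    fun ω => e.symm ω.1, (Measure.volumeIoiPow 1).map Subtype.val, inferInstance,
    ν.toSphere_ne_zero, hes.comp measurable_subtype_coe, ?_, inferInstance, ?_, ?_, ?_, ?_⟩
  · intro ω
    rw [hl1]; simp
  · rw [Measure.map_apply measurable_subtype_coe measurableSet_Iic]
    convert measure_empty (μ := Measure.volumeIoiPow 1)
    ext x
    have := x.2
    rw [mem_Ioi] at this
    simp only [mem_preimage, mem_Iic, mem_empty_iff_false, iff_false, not_le]
    exact this
  · intro x
    rw [Measure.map_apply measurable_subtype_coe measurableSet_Iio]
    by_cases hx : 0 < x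
    · have := Measure.volumeIoiPow_apply_Iio 1 ⟨x, hx⟩
      have h2 : (Subtype.val ⁻¹' Iio x : Set (Ioi (0:ℝ))) = Iio ⟨x, hx⟩ := by
        ext y; simp [← Subtype.coe_lt_coe]
      rw [h2, this]
      exact ENNReal.ofReal_ne_top
    · have : (Subtype.val ⁻¹' Iio x : Set (Ioi (0:ℝ))) = ∅ := by
        ext y
        have := y.2
        simp only [mem_Ioi] at this
        simp; linarith
      rw [this]; simp
  · intro s hs
    obtain ⟨t, hst, ht, ht0⟩ := exists_measurable_superset_of_null hs
    refine measure_mono_null hst ?_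
    rw [Measure.map_apply measurable_subtype_coe ht]
    refine (withDensity_absolutelyContinuous _ _) ?_
    rw [comap_subtype_coe_apply measurableSet_Ioi]
    exact measure_mono_null (by simp) ht0
  · intro F hF
    have hFe : Measurable (fun x => F (e.symm x)) := hF.comp hes
    have h1 : ∫⁻ x, F x = ∫⁻ x, F (e.symm x) ∂ν := by
      rw [lintegral_map hFe hem]; simp
    have h2 : ∫⁻ x, F (e.symm x) ∂ν
        = ∫⁻ x : ({0}ᶜ : Set (WithLp 1 (ℝ × ℝ))), F (e.symm x.1) ∂(ν.comap (↑)) := by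
      rw [lintegral_subtype_comap (measurableSet_singleton _).compl (fun x => F (e.symm x)),
        restrict_compl_singleton]
    have h3 : ∫⁻ x : ({0}ᶜ : Set (WithLp 1 (ℝ × ℝ))), F (e.symm x.1) ∂(ν.comap (↑))
        = ∫⁻ p, F (p.2.1 • e.symm p.1.1) ∂(ν.toSphere.prod (Measure.volumeIoiPow 1)) := by
      rw [← hpres.lintegral_comp_emb (Homeomorph.measurableEmbedding _)]
      refine lintegral_congr fun x => ?_
      congr 1
      rw [← map_smul]
      congr 1
      have hx : ‖x.1‖ ≠ 0 := norm_ne_zero_iff.2 x.2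
      simp [smul_smul, hx]
    have hm : Measurable (fun p : Metric.sphere (0 : WithLp 1 (ℝ × ℝ)) 1 × Ioi (0:ℝ) =>
        F (p.2.1 • e.symm p.1.1)) := by
      apply hF.comp
      exact (measurable_subtype_coe.comp measurable_snd).smul
        (hes.comp (measurable_subtype_coe.comp measurable_fst))
    rw [h1, h2, h3, lintegral_prod _ hm.aemeasurable]
    refine lintegral_congr fun ω => ?_
    rw [lintegral_map (show Measurable (fun r : ℝ => F (r • e.symm ω.1)) from
      hF.comp (measurable_id.smul_const _)) measurable_subtype_coe]

theorem l1_nonneg (x : ℝ × ℝ) : 0 ≤ l1 x := by unfold l1; positivity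

theorem l1_measurable : Measurable l1 := by
  unfold l1
  exact (continuous_fst.abs.add continuous_snd.abs).measurable

theorem l1_add_le (x t : ℝ × ℝ) : l1 (x + t) ≤ l1 x + l1 t := by
  unfold l1
  have h1 := abs_add_le x.1 t.1
  have h2 := abs_add_le x.2 t.2
  simp only [Prod.fst_add, Prod.snd_add]
  linarith

theorem l1_smul (r : ℝ) (x : ℝ × ℝ) : l1 (r • x) = |r| * l1 x := by
  unfold l1
  simp [abs_mul, mul_add]

theorem dpc_withDensity (ε Δ : ℝ) (p : ℝ × ℝ → ℝ≥0∞) (hp : Measurable p)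
    (h : ∀ x t, l1 t ≤ Δ → p x ≤ ENNReal.ofReal (Real.exp ε) * p (x + t)) :
    DPC ε Δ (volume.withDensity p) := by
  intro S hS t ht
  have hme : MeasurableEmbedding (fun x : ℝ × ℝ => x + t) := measurableEmbedding_addRight t
  rw [withDensity_apply _ hS, withDensity_apply _ (hme.measurableSet_image.2 hS)]
  rw [← (measurePreserving_add_right (volume : Measure (ℝ × ℝ)) t).setLIntegral_comp_emb hme]
  rw [← lintegral_const_mul _ (show Measurable (fun x => p (x + t)) from hp.comp hme.measurable)]
  exact lintegral_mono fun x => h x t ht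

theorem layerIdx_measurable (Δ : ℝ) (i : ℕ) : Measurable (layerIdx Δ i) := by
  unfold layerIdx
  exact Nat.measurable_floor.comp ((l1_measurable.mul_const _).div_const _)

theorem layerIdx_add_le (Δ : ℝ) (hΔ : 0 < Δ) (i : ℕ) (x t : ℝ × ℝ) (ht : l1 t ≤ Δ) :
    layerIdx Δ i (x + t) ≤ layerIdx Δ i x + i := by
  unfold layerIdx
  have h0 := l1_nonneg x
  rw [← Nat.floor_add_natCast (by positivity)]
  apply Nat.floor_le_floor
  have h1 := l1_add_le x t
  rw [div_add' _ _ _ hΔ.ne']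
  apply div_le_div_of_nonneg_right _ hΔ.le
  have : (0:ℝ) ≤ i := Nat.cast_nonneg i
  nlinarith

theorem cand_le (ε Δ : ℝ) (hΔ : 0 < Δ) (i : ℕ) (hi : 3 ≤ i) (a : ℕ → ℝ≥0∞)
    (ha : Antitone a) (hgeo : ∀ k : ℕ, a k = ENNReal.ofReal (Real.exp ε) * a (k + i))
    (h0 : a 0 = ENNReal.ofReal (Real.exp ε) * a (i - 1))
    (hM : ∫⁻ x, a (layerIdx Δ i x) ≠ ∞) :
    (⨅ (μ : Measure (ℝ × ℝ)) (_ : ∃ i : ℕ, 3 ≤ i ∧ MemPc ε Δ i μ), cost μ) *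
      ∫⁻ x, a (layerIdx Δ i x) ≤ ∫⁻ x, a (layerIdx Δ i x) * ENNReal.ofReal (l1 x) := by
  set M := ∫⁻ x, a (layerIdx Δ i x) with hMdef
  by_cases hM0 : M = 0
  · simp [hM0]
  have hpm : Measurable (fun x => a (layerIdx Δ i x)) :=
    (measurable_of_countable a).comp (layerIdx_measurable Δ i)
  set b : ℕ → ℝ≥0∞ := fun k => M⁻¹ * a k with hb
  have hbm : Measurable (fun x => b (layerIdx Δ i x)) :=
    (measurable_of_countable b).comp (layerIdx_measurable Δ i)
  have hbanti : Antitone b := fun j k hjk => by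
    simp only [hb]; gcongr; exact ha hjk
  have hbgeo : ∀ k : ℕ, b k = ENNReal.ofReal (Real.exp ε) * b (k + i) := fun k => by
    simp only [hb]; rw [hgeo k]; ring
  have hb0 : b 0 = ENNReal.ofReal (Real.exp ε) * b (i - 1) := by
    simp only [hb]; rw [h0]; ring
  have hmem : MemPc ε Δ i (volume.withDensity (fun x => b (layerIdx Δ i x))) := by
    refine ⟨⟨⟨?_⟩, ?_⟩, b, rfl, hbanti, hbgeo, hb0, 0, Nat.zero_le _, ?_⟩
    · rw [withDensity_apply _ MeasurableSet.univ, Measure.restrict_univ]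
      simp only [hb]
      rw [lintegral_const_mul _ hpm]
      exact ENNReal.inv_mul_cancel hM0 hM
    · apply dpc_withDensity _ _ _ hbm
      intro x t ht
      rw [hbgeo]
      gcongr
      exact hbanti (layerIdx_add_le Δ hΔ i x t ht)
    · intro j hj
      rw [Nat.le_zero.1 hj]
  have hle : (⨅ (μ : Measure (ℝ × ℝ)) (_ : ∃ i : ℕ, 3 ≤ i ∧ MemPc ε Δ i μ), cost μ) ≤
      cost (volume.withDensity (fun x => b (layerIdx Δ i x))) :=
    iInf₂_le _ ⟨i, hi, hmem⟩
  have hcost : cost (volume.withDensity (fun x => b (layerIdx Δ i x))) =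
      M⁻¹ * ∫⁻ x, a (layerIdx Δ i x) * ENNReal.ofReal (l1 x) := by
    unfold cost
    rw [lintegral_withDensity_eq_lintegral_mul _ hbm l1_measurable.ennreal_ofReal,
      ← lintegral_const_mul _ (show Measurable (fun x => a (layerIdx Δ i x) * ENNReal.ofReal (l1 x))
        from hpm.mul l1_measurable.ennreal_ofReal)]
    refine lintegral_congr fun x => ?_
    simp only [hb, Pi.mul_apply]
    ring
  rw [hcost] at hle
  calc _ ≤ (M⁻¹ * ∫⁻ x, a (layerIdx Δ i x) * ENNReal.ofReal (l1 x)) * M := by gcongr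
    _ = (M⁻¹ * M) * ∫⁻ x, a (layerIdx Δ i x) * ENNReal.ofReal (l1 x) := by ring
    _ = _ := by rw [ENNReal.inv_mul_cancel hM0 hM, one_mul]

/-- Index shift used for the discretisation. -/
def eidx (i k : ℕ) : ℕ := k + 1 + if (k + 1) % i = 0 then 1 else 0

theorem eidx_le (i k : ℕ) : eidx i k ≤ k + 2 := by unfold eidx; split_ifs <;> omega
theorem le_eidx (i k : ℕ) : k + 1 ≤ eidx i k := by unfold eidx; split_ifs <;> omega
theorem eidx_add (i k : ℕ) : eidx i (k + i) = eidx i k + i := by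
  unfold eidx
  have : (k + i + 1) % i = (k + 1) % i := by
    rw [show k + i + 1 = k + 1 + i by ring, Nat.add_mod_right]
  rw [this]; ring
theorem eidx_mono (i : ℕ) : Monotone (eidx i) := by
  apply monotone_nat_of_le_succ
  intro k
  have h1 := eidx_le i k
  have h2 := le_eidx i (k + 1)
  omega
theorem eidx_last (i : ℕ) (hi : 3 ≤ i) : eidx i (i - 1) = eidx i 0 + i := by
  unfold eidx
  have : i - 1 + 1 = i := by omega
  have h1 : (0 + 1) % i = 1 := Nat.mod_eq_of_lt (by omega)
  rw [this, h1]; simp; ring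

/-- Property (of a radial measure `ρ`) that `c` bounds the cost ratio of all candidates. -/
def CandBound (ε Δ : ℝ) (ρ : Measure ℝ) (c : ℝ≥0∞) : Prop :=
  ∀ i : ℕ, 3 ≤ i → ∀ a : ℕ → ℝ≥0∞, Antitone a →
    (∀ k : ℕ, a k = ENNReal.ofReal (Real.exp ε) * a (k + i)) →
    a 0 = ENNReal.ofReal (Real.exp ε) * a (i - 1) →
    ∫⁻ r, a ⌊r * i / Δ⌋₊ ∂ρ ≠ ∞ →
    c * ∫⁻ r, a ⌊r * i / Δ⌋₊ ∂ρ ≤ ∫⁻ r, a ⌊r * i / Δ⌋₊ * ENNReal.ofReal r ∂ρ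

open Set in
theorem fatou_bound (ε Δ : ℝ) (hΔ : 0 < Δ) (ρ : Measure ℝ) (hρ0 : ρ (Iic 0) = 0)
    (hρ : ρ ≪ volume) (c : ℝ≥0∞) (hc : CandBound ε Δ ρ c) (G : ℝ → ℝ≥0∞) (hG : Antitone G)
    (hgeo : ∀ r, G r = ENNReal.ofReal (Real.exp ε) * G (r + Δ)) (hfin : ∫⁻ r, G r ∂ρ ≠ ∞) :
    c * ∫⁻ r, G r ∂ρ ≤ ∫⁻ r, G r * ENNReal.ofReal r ∂ρ := by
  have hpos : ∀ᵐ r ∂ρ, 0 < r := by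
    rw [ae_iff]; simpa [Set.Iic_def] using hρ0
  let a : ℕ → ℕ → ℝ≥0∞ := fun i k => G (eidx i k * Δ / i)
  have hmeas : ∀ i, Measurable (fun r : ℝ => a i ⌊r * i / Δ⌋₊) := fun i =>
    (measurable_of_countable (a i)).comp
      (Nat.measurable_floor.comp ((measurable_id.mul_const _).div_const _))
  -- upper and lower bounds
  have hup : ∀ i : ℕ, 3 ≤ i → ∀ r : ℝ, a i ⌊r * i / Δ⌋₊ ≤ G r := by
    intro i hi r
    apply hG
    have hi0 : (0:ℝ) < i := by positivity
    rw [le_div_iff₀ hi0, ← div_le_iff₀ hΔ]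
    have h1 := Nat.lt_floor_add_one (r * i / Δ)
    have h2 : ((⌊r * i / Δ⌋₊ + 1 : ℕ) : ℝ) ≤ eidx i ⌊r * i / Δ⌋₊ := by
      exact_mod_cast le_eidx _ _
    push_cast at h2
    linarith
  have hlow : ∀ i : ℕ, 3 ≤ i → ∀ r : ℝ, 0 < r → G (r + 2 * Δ / i) ≤ a i ⌊r * i / Δ⌋₊ := by
    intro i hi r hr
    apply hG
    have hi0 : (0:ℝ) < i := by positivity
    rw [div_le_iff₀ hi0]
    have h1 := Nat.floor_le (a := r * i / Δ) (by positivity)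
    have h2 : (eidx i ⌊r * i / Δ⌋₊ : ℝ) ≤ ((⌊r * i / Δ⌋₊ + 2 : ℕ) : ℝ) := by
      exact_mod_cast eidx_le _ _
    push_cast at h2
    rw [le_div_iff₀ hΔ] at h1
    have h3 : (r + 2 * Δ / i) * i = r * i + 2 * Δ := by field_simp
    rw [h3]
    nlinarith
  have hstep : ∀ i : ℕ, 3 ≤ i → ∫⁻ r, c * a i ⌊r * i / Δ⌋₊ ∂ρ ≤ ∫⁻ r, G r * ENNReal.ofReal r ∂ρ := by
    intro i hi
    have hi0 : (0:ℝ) < i := by positivity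
    rw [lintegral_const_mul _ (hmeas i)]
    refine (hc i hi (a i) ?_ ?_ ?_ ?_).trans ?_
    · intro j k hjk
      apply hG
      have : (eidx i j : ℝ) ≤ eidx i k := by exact_mod_cast eidx_mono i hjk
      gcongr
    · intro k
      simp only [a]
      rw [hgeo, eidx_add]
      congr 2
      push_cast
      field_simp
    · simp only [a]
      rw [hgeo, eidx_last i hi]
      congr 2
      push_cast
      field_simp
    · exact ((lintegral_mono (hup i hi)).trans_lt hfin.lt_top).ne
    · exact lintegral_mono fun r => by gcongr; exact hup i hi r
  have hcont : ∀ᵐ r ∂ρ, ContinuousAt G r := by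
    apply hρ.ae_le
    filter_upwards [hG.countable_not_continuousAt.ae_notMem volume] with x hx
    simpa using hx
  rw [← lintegral_const_mul _ hG.measurable]
  calc ∫⁻ r, c * G r ∂ρ
      ≤ ∫⁻ r, liminf (fun n : ℕ => c * a (n + 3) ⌊r * (n + 3 : ℕ) / Δ⌋₊) atTop ∂ρ := by
        apply lintegral_mono_ae
        filter_upwards [hpos, hcont] with r hr hcr
        have ht : Tendsto (fun n : ℕ => G (r + 2 * Δ / ((n + 3 : ℕ) : ℝ))) atTop (𝓝 (G r)) := by
          apply hcr.tendsto.comp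
          have h1 : Tendsto (fun n : ℕ => 2 * Δ / ((n + 3 : ℕ) : ℝ)) atTop (𝓝 0) :=
            (tendsto_const_div_atTop_nhds_zero_nat (2 * Δ)).comp (tendsto_add_atTop_nat 3)
          simpa using h1.const_add r
        have ht2 : Tendsto (fun n : ℕ => a (n + 3) ⌊r * (n + 3 : ℕ) / Δ⌋₊) atTop (𝓝 (G r)) :=
          tendsto_of_tendsto_of_tendsto_of_le_of_le ht tendsto_const_nhds
            (fun n => hlow (n + 3) (by omega) r hr) (fun n => hup (n + 3) (by omega) r)
        by_cases hG0 : G r = 0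
        · simp [hG0]
        · exact (ENNReal.Tendsto.const_mul ht2 (Or.inl hG0)).liminf_eq.ge
    _ ≤ liminf (fun n : ℕ => ∫⁻ r, c * a (n + 3) ⌊r * (n + 3 : ℕ) / Δ⌋₊ ∂ρ) atTop :=
        lintegral_liminf_le fun n => (hmeas (n + 3)).const_mul c
    _ ≤ ∫⁻ r, G r * ENNReal.ofReal r ∂ρ := by
        refine (liminf_le_liminf (Eventually.of_forall fun n => hstep (n + 3) (by omega))).trans ?_
        simp

open Set in
theorem oneD (ε Δ lam : ℝ) (hε : 0 < ε) (hΔ : 0 < Δ) (ρ : Measure ℝ)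
    (hρ0 : ρ (Iic 0) = 0) (hρfin : ∀ x, ρ (Iio x) ≠ ∞) (hρ : ρ ≪ volume)
    (hc : CandBound ε Δ ρ (ENNReal.ofReal lam)) (h : ℝ → ℝ≥0∞) (hm : Measurable h)
    (B : ℝ≥0∞) (hBtop : B ≠ ∞) (hB : ∀ r, h r ≤ B)
    (hDP : ∀ r s, |r - s| ≤ Δ → h s ≤ ENNReal.ofReal (Real.exp ε) * h r)
    (h1 : ∫⁻ r, h r ∂ρ = 1) :
    ENNReal.ofReal lam ≤ ∫⁻ r, h r * ENNReal.ofReal r ∂ρ := by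
  have hpos : ∀ᵐ r ∂ρ, 0 < r := by
    rw [ae_iff]; simpa [Set.Iic_def] using hρ0
  have hN : ∀ n : ℕ, ∀ r s : ℝ, |r - s| ≤ n * Δ → h s ≤ ENNReal.ofReal (Real.exp (ε * n)) * h r := by
    intro n
    induction n with
    | zero =>
      intro r s hrs
      have : r - s = 0 := abs_nonpos_iff.1 (by simpa using hrs)
      have : r = s := by linarith
      simp [this]
    | succ n ih =>
      intro r s hrs
      have hn : (0:ℝ) < n + 1 := by positivity
      push_cast at hrs
      have e1 : |s + (r - s) * (n / (n + 1)) - s| ≤ n * Δ := by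
        rw [add_sub_cancel_left, abs_mul, abs_of_nonneg (by positivity : (0:ℝ) ≤ n / (n + 1))]
        calc |r - s| * (n / (n + 1)) ≤ ((n + 1) * Δ) * (n / (n + 1)) := by gcongr
          _ = n * Δ := by field_simp
      have e2 : |r - (s + (r - s) * (n / (n + 1)))| ≤ Δ := by
        have : r - (s + (r - s) * (n / (n + 1))) = (r - s) / (n + 1) := by field_simp; ring
        rw [this, abs_div, abs_of_pos hn, div_le_iff₀ hn]
        linarith
      refine (ih _ _ e1).trans ?_
      calc _ ≤ ENNReal.ofReal (Real.exp (ε * n)) * (ENNReal.ofReal (Real.exp ε) * h r) := by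
            gcongr; exact hDP _ _ e2
        _ = _ := by
            rw [← mul_assoc, ← ENNReal.ofReal_mul (Real.exp_pos _).le, ← Real.exp_add]
            congr 3; push_cast; ring
  let N : ℝ → ℤ := fun r => ⌊(r - lam) / Δ⌋ + 1
  let q : ℝ → ℝ≥0∞ := fun u => ⨆ s ∈ Icc u lam, h s
  let G : ℝ → ℝ≥0∞ := fun r => ENNReal.ofReal (Real.exp (-ε * N r)) * q (r - N r * Δ)
  have hNlo : ∀ r, lam + (N r - 1) * Δ ≤ r := by
    intro r
    have := Int.floor_le ((r - lam) / Δ)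
    rw [le_div_iff₀ hΔ] at this
    simp only [N]; push_cast; linarith
  have hNhi : ∀ r, r < lam + N r * Δ := by
    intro r
    have := Int.lt_floor_add_one ((r - lam) / Δ)
    rw [div_lt_iff₀ hΔ] at this
    simp only [N]; push_cast; linarith
  have hqle : ∀ u, q u ≤ B := fun u => iSup₂_le fun s _ => hB s
  have hGtop : ∀ r, G r ≠ ∞ := fun r =>
    ENNReal.mul_ne_top ENNReal.ofReal_ne_top ((hqle _).trans_lt hBtop.lt_top).ne
  have hgeo : ∀ r, G r = ENNReal.ofReal (Real.exp ε) * G (r + Δ) := by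
    intro r
    have hNs : N (r + Δ) = N r + 1 := by
      simp only [N]
      rw [show (r + Δ - lam) / Δ = (r - lam) / Δ + 1 by field_simp; ring, Int.floor_add_one]
    simp only [G]
    rw [hNs, ← mul_assoc, ← ENNReal.ofReal_mul (Real.exp_pos _).le, ← Real.exp_add]
    congr 2
    · congr 1; push_cast; ring
    · push_cast; ring_nf
  have hG : Antitone G := by
    intro r r' hrr
    have hNN : N r ≤ N r' := by
      simp only [N]
      gcongr
    rcases hNN.eq_or_lt with heq | hlt
    · simp only [G]
      rw [← heq]
      gcongr
      refine iSup₂_le fun s hs => ?_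
      exact le_iSup₂_of_le s ⟨by linarith [hs.1], hs.2⟩ le_rfl
    · have hlt' : (N r : ℝ) + 1 ≤ N r' := by exact_mod_cast hlt
      have hq' : q (r' - N r' * Δ) ≤ ENNReal.ofReal (Real.exp ε) * h lam := by
        refine iSup₂_le fun s hs => hDP _ _ ?_
        have := hNlo r'
        have h2 := hs.1
        rw [abs_of_nonneg (by linarith [hs.2])]
        linarith
      have hq : h lam ≤ q (r - N r * Δ) :=
        le_iSup₂_of_le lam ⟨by linarith [hNhi r], le_rfl⟩ le_rfl
      calc G r' ≤ ENNReal.ofReal (Real.exp (-ε * N r')) * (ENNReal.ofReal (Real.exp ε) * h lam) := by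
            simp only [G]; gcongr
        _ = ENNReal.ofReal (Real.exp (-ε * N r' + ε)) * h lam := by
            rw [← mul_assoc, ← ENNReal.ofReal_mul (Real.exp_pos _).le, ← Real.exp_add]
        _ ≤ G r := by
            simp only [G]
            gcongr
            nlinarith
  have hleft : ∀ r, r < lam → h r ≤ G r := by
    intro r hr
    have hN0 : N r ≤ 0 := by
      have : (N r : ℝ) - 1 < 0 := by
        by_contra hcon
        push Not at hcon
        have := hNlo r
        nlinarith
      have : N r < 1 := by exact_mod_cast (by linarith : (N r : ℝ) < 1)
      omega
    obtain ⟨n, hn⟩ := Int.exists_eq_neg_ofNat hN0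
    have hn' : (N r : ℝ) = -n := by rw [hn]; push_cast; rfl
    have e1 : |r - N r * Δ - r| ≤ n * Δ := by
      rw [hn']
      rw [show r - -(n:ℝ) * Δ - r = n * Δ by ring, abs_of_nonneg (by positivity)]
    refine (hN n _ _ e1).trans ?_
    simp only [G]
    rw [show -ε * (N r : ℝ) = ε * n by rw [hn']; ring]
    gcongr
    exact le_iSup₂_of_le (r - N r * Δ) ⟨le_rfl, by linarith [hNhi r]⟩ le_rfl
  have hright : ∀ r, lam ≤ r → G r ≤ h r := by
    intro r hr
    have hN0 : 0 ≤ N r := by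
      have : (0:ℝ) < N r := by
        by_contra hcon
        push Not at hcon
        have := hNhi r
        nlinarith
      have : 0 < N r := by exact_mod_cast this
      omega
    obtain ⟨n, hn⟩ := Int.eq_ofNat_of_zero_le hN0
    have hn' : (N r : ℝ) = n := by rw [hn]; push_cast; rfl
    simp only [G]
    have hq : q (r - N r * Δ) ≤ ENNReal.ofReal (Real.exp (ε * n)) * h r := by
      refine iSup₂_le fun s hs => hN n _ _ ?_
      have := hs.1
      rw [abs_of_nonneg (by linarith [hs.2]), ← hn']
      linarith
    calc _ ≤ ENNReal.ofReal (Real.exp (-ε * N r)) * (ENNReal.ofReal (Real.exp (ε * n)) * h r) := by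
          gcongr
      _ = h r := by
          rw [← mul_assoc, ← ENNReal.ofReal_mul (Real.exp_pos _).le, ← Real.exp_add, hn']
          simp
  have hfin : ∫⁻ r, G r ∂ρ ≠ ∞ := by
    rw [← lintegral_add_compl G (measurableSet_Iio (a := lam))]
    refine ENNReal.add_ne_top.2 ⟨?_, ?_⟩
    · refine ne_top_of_le_ne_top (ENNReal.mul_ne_top (hGtop 0) (hρfin lam)) ?_
      rw [← setLIntegral_const]
      apply lintegral_mono_ae
      filter_upwards [ae_restrict_of_ae hpos] with r hr
      exact hG hr.le
    · refine ne_top_of_le_ne_top (b := 1) ENNReal.one_ne_top ?_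
      rw [← h1]
      refine le_trans ?_ (setLIntegral_le_lintegral (Iio lam)ᶜ h)
      apply setLIntegral_mono hm
      intro r hr
      exact hright r (by simpa using hr)
  have hfat := fatou_bound ε Δ hΔ ρ hρ0 hρ _ hc G hG hgeo hfin
  have hGm := hG.measurable
  have hRm : Measurable (fun r : ℝ => ENNReal.ofReal r) := ENNReal.measurable_ofReal
  have key : ∫⁻ r, G r * ENNReal.ofReal r ∂ρ + ENNReal.ofReal lam * ∫⁻ r, h r ∂ρ ≤
      ∫⁻ r, h r * ENNReal.ofReal r ∂ρ + ENNReal.ofReal lam * ∫⁻ r, G r ∂ρ := by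
    rw [← lintegral_const_mul _ hm, ← lintegral_const_mul _ hGm,
      ← lintegral_add_right _ (hm.const_mul _), ← lintegral_add_right _ (hGm.const_mul _)]
    apply lintegral_mono
    intro r
    dsimp only
    rcases lt_or_ge r lam with hr | hr
    · obtain ⟨d, hd⟩ := exists_add_of_le (hleft r hr)
      rw [hd]
      calc _ = h r * ENNReal.ofReal r + ENNReal.ofReal lam * h r + d * ENNReal.ofReal r := by ring
        _ ≤ h r * ENNReal.ofReal r + ENNReal.ofReal lam * h r + d * ENNReal.ofReal lam := by
            gcongr
        _ = _ := by ring
    · obtain ⟨d, hd⟩ := exists_add_of_le (hright r hr)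
      rw [hd]
      calc _ = G r * ENNReal.ofReal r + ENNReal.ofReal lam * G r + d * ENNReal.ofReal lam := by ring
        _ ≤ G r * ENNReal.ofReal r + ENNReal.ofReal lam * G r + d * ENNReal.ofReal r := by
            gcongr
        _ = _ := by ring
  rw [h1, mul_one] at key
  have hfin2 : ENNReal.ofReal lam * ∫⁻ r, G r ∂ρ ≠ ∞ := ENNReal.mul_ne_top ENNReal.ofReal_ne_top hfin
  have key2 : ENNReal.ofReal lam * ∫⁻ r, G r ∂ρ + ENNReal.ofReal lam ≤
      ENNReal.ofReal lam * ∫⁻ r, G r ∂ρ + ∫⁻ r, h r * ENNReal.ofReal r ∂ρ := by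
    rw [add_comm _ (∫⁻ r, h r * ENNReal.ofReal r ∂ρ)]
    exact le_trans (by gcongr) key
  exact (ENNReal.add_le_add_iff_left hfin2).1 key2

theorem core (ε Δ : ℝ) (hε : 0 < ε) (hΔ : 0 < Δ) (f : ℝ × ℝ → ℝ≥0∞) (hf : Measurable f)
    (B : ℝ≥0∞) (hBtop : B ≠ ∞) (hB : ∀ x, f x ≤ B)
    (hDP : ∀ x t, l1 t ≤ Δ → f x ≤ ENNReal.ofReal (Real.exp ε) * f (x + t))
    (h1 : ∫⁻ x, f x = 1) :
    (⨅ (μ : Measure (ℝ × ℝ)) (_ : ∃ i : ℕ, 3 ≤ i ∧ MemPc ε Δ i μ), cost μ) ≤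
      ∫⁻ x, f x * ENNReal.ofReal (l1 x) := by
  obtain ⟨Ω, mΩ, σ, u, ρ, hσ, hσ0, hu, hu1, hsf, hρ0, hρfin, hρ, hpol⟩ := polar_l1
  have hpos : ∀ᵐ r ∂ρ, 0 < r := by
    rw [ae_iff]; simpa [Set.Iic_def] using hρ0
  have hs0 : σ Set.univ ≠ 0 := by simpa using hσ0
  have hsigma_fin : σ Set.univ ≠ ∞ := measure_ne_top _ _
  have hrad : ∀ φ : ℝ → ℝ≥0∞, Measurable φ →
      ∫⁻ x, φ (l1 x) = σ Set.univ * ∫⁻ r, φ r ∂ρ := by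
    intro φ hφ
    rw [hpol (fun x => φ (l1 x)) (hφ.comp l1_measurable)]
    have : ∀ ω, ∫⁻ r, φ (l1 (r • u ω)) ∂ρ = ∫⁻ r, φ r ∂ρ := by
      intro ω
      apply lintegral_congr_ae
      filter_upwards [hpos] with r hr
      rw [l1_smul, hu1, mul_one, abs_of_pos hr]
    simp_rw [this]
    rw [lintegral_const, mul_comm]
  have hjm : Measurable (fun p : ℝ × Ω => f (p.1 • u p.2)) :=
    hf.comp (measurable_fst.smul (hu.comp measurable_snd))
  let h : ℝ → ℝ≥0∞ := fun r => ∫⁻ ω, f (r • u ω) ∂σ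
  have hhm : Measurable h := hjm.lintegral_prod_right'
  have hfh : ∀ φ : ℝ → ℝ≥0∞, Measurable φ →
      ∫⁻ x, f x * φ (l1 x) = ∫⁻ r, h r * φ r ∂ρ := by
    intro φ hφ
    rw [hpol (fun x => f x * φ (l1 x)) (hf.mul (hφ.comp l1_measurable))]
    have e1 : ∀ ω, ∫⁻ r, f (r • u ω) * φ (l1 (r • u ω)) ∂ρ = ∫⁻ r, f (r • u ω) * φ r ∂ρ := by
      intro ω
      apply lintegral_congr_ae
      filter_upwards [hpos] with r hr
      rw [l1_smul, hu1, mul_one, abs_of_pos hr]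
    simp_rw [e1]
    rw [lintegral_lintegral_swap]
    · refine lintegral_congr fun r => ?_
      rw [lintegral_mul_const]
      exact hjm.comp measurable_prodMk_left
    · exact ((hjm.comp measurable_swap).mul (hφ.comp measurable_snd)).aemeasurable
  refine le_of_forall_lt fun c hc => ?_
  obtain ⟨c', hcc', hc'⟩ := exists_between hc
  refine hcc'.trans_le ?_
  have hctop : c' ≠ ∞ := hc'.ne_top
  have hV := hfh (fun r => ENNReal.ofReal r) ENNReal.measurable_ofReal
  have h1' := hfh (fun _ => 1) measurable_const
  simp only [mul_one] at h1'
  rw [hV]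
  rw [← ENNReal.ofReal_toReal hctop]
  refine oneD ε Δ _ hε hΔ ρ hρ0 hρfin hρ ?_ h hhm (B * σ Set.univ)
    (ENNReal.mul_ne_top hBtop hsigma_fin) ?_ ?_ (h1' ▸ h1)
  · rw [ENNReal.ofReal_toReal hctop]
    intro i hi a ha hgeo h0 hfin
    have hm1 : Measurable (fun r : ℝ => a ⌊r * i / Δ⌋₊) := (measurable_of_countable a).comp
      (Nat.measurable_floor.comp ((measurable_id.mul_const _).div_const _))
    have e1 : ∫⁻ x, a (layerIdx Δ i x) = σ Set.univ * ∫⁻ r, a ⌊r * i / Δ⌋₊ ∂ρ := hrad _ hm1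
    have e2 : ∫⁻ x, a (layerIdx Δ i x) * ENNReal.ofReal (l1 x) =
      σ Set.univ * ∫⁻ r, a ⌊r * i / Δ⌋₊ * ENNReal.ofReal r ∂ρ :=
      hrad (fun r => a ⌊r * i / Δ⌋₊ * ENNReal.ofReal r) (hm1.mul ENNReal.measurable_ofReal)
    have := cand_le ε Δ hΔ i hi a ha hgeo h0 (by rw [e1]; exact ENNReal.mul_ne_top hsigma_fin hfin)
    rw [e1, e2, mul_left_comm, ENNReal.mul_le_mul_iff_right hs0 hsigma_fin] at this
    refine le_trans ?_ this
    gcongr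
  · intro r
    rw [← lintegral_const]
    exact lintegral_mono fun ω => hB _
  · intro r s hrs
    simp only [h]
    rw [← lintegral_const_mul _ (show Measurable (fun ω => f (r • u ω)) from
      hjm.comp measurable_prodMk_left)]
    refine lintegral_mono fun ω => ?_
    have := hDP (s • u ω) ((r - s) • u ω) (by rw [l1_smul, hu1, mul_one]; exact hrs)
    rwa [← add_smul, add_sub_cancel] at this

theorem smooth (ε Δ : ℝ) (hε : 0 < ε) (hΔ : 0 < Δ) (μ : Measure (ℝ × ℝ)) (hμ : MemP ε Δ μ)
    (η : ℝ) (hη : 0 < η) :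
    (⨅ (μ : Measure (ℝ × ℝ)) (_ : ∃ i : ℕ, 3 ≤ i ∧ MemPc ε Δ i μ), cost μ) ≤
      cost μ + ENNReal.ofReal (2 * η) := by
  obtain ⟨hprob, hdp⟩ := hμ
  set v : ℝ≥0∞ := volume (Metric.closedBall (0 : ℝ × ℝ) η) with hv
  have hv0 : v ≠ 0 := (Metric.measure_closedBall_pos _ _ hη).ne'
  have hvtop : v ≠ ∞ := measure_closedBall_lt_top.ne
  have hvx : ∀ x : ℝ × ℝ, volume (Metric.closedBall x η) = v := fun x =>
    Measure.addHaar_closedBall_center _ _ _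
  let D : Set ((ℝ × ℝ) × (ℝ × ℝ)) := {p | dist p.2 p.1 ≤ η}
  have hD : MeasurableSet D :=
    (isClosed_le (continuous_snd.dist continuous_fst) continuous_const).measurableSet
  have hgm : Measurable (fun x => μ (Metric.closedBall x η)) :=
    measurable_measure_prodMk_left (ν := μ) hD
  let f : ℝ × ℝ → ℝ≥0∞ := fun x => v⁻¹ * μ (Metric.closedBall x η)
  have hfm : Measurable f := hgm.const_mul _
  have hton : ∀ φ : ℝ × ℝ → ℝ≥0∞, Measurable φ →
      ∫⁻ x, f x * φ x = v⁻¹ * ∫⁻ y, (∫⁻ x in Metric.closedBall y η, φ x) ∂μ := by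
    intro φ hφ
    have hjm : Measurable (fun p : (ℝ × ℝ) × (ℝ × ℝ) => D.indicator (fun p => φ p.1) p) :=
      (hφ.comp measurable_fst).indicator hD
    have e1 : ∀ x, f x * φ x = v⁻¹ * ∫⁻ y, D.indicator (fun p => φ p.1) (x, y) ∂μ := by
      intro x
      have : ∀ y, D.indicator (fun p => φ p.1) (x, y) =
          (Metric.closedBall x η).indicator (fun _ => φ x) y := by
        intro y
        simp only [Set.indicator, D, Metric.mem_closedBall, Set.mem_ofPred_eq]
      simp_rw [this]
      rw [lintegral_indicator_const measurableSet_closedBall]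
      simp only [f]; ring
    simp_rw [e1]
    rw [lintegral_const_mul _ hjm.lintegral_prod_right',
      lintegral_lintegral_swap hjm.aemeasurable]
    congr 1
    refine lintegral_congr fun y => ?_
    rw [← lintegral_indicator measurableSet_closedBall]
    refine lintegral_congr fun x => ?_
    simp only [Set.indicator, D, Metric.mem_closedBall, Set.mem_ofPred_eq, dist_comm]
  have hmain := core ε Δ hε hΔ f hfm v⁻¹ (ENNReal.inv_ne_top.2 hv0) ?_ ?_ ?_
  · refine hmain.trans ?_
    rw [hton _ l1_measurable.ennreal_ofReal]
    have e1 : ∀ y, ∫⁻ x in Metric.closedBall y η, ENNReal.ofReal (l1 x) ≤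
        (ENNReal.ofReal (l1 y) + ENNReal.ofReal (2 * η)) * v := by
      intro y
      rw [← hvx y, ← setLIntegral_const]
      apply setLIntegral_mono measurable_const
      intro x hx
      rw [← ENNReal.ofReal_add (l1_nonneg y) (by positivity)]
      apply ENNReal.ofReal_le_ofReal
      have h1 := l1_add_le y (x - y)
      rw [add_sub_cancel] at h1
      have h2 : l1 (x - y) ≤ 2 * η := by
        rw [Metric.mem_closedBall, dist_eq_norm] at hx
        have a1 := (norm_fst_le (x - y)).trans hx
        have a2 := (norm_snd_le (x - y)).trans hx
        rw [Real.norm_eq_abs] at a1 a2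
        unfold l1
        linarith
      linarith
    calc _ ≤ v⁻¹ * ∫⁻ y, (ENNReal.ofReal (l1 y) + ENNReal.ofReal (2 * η)) * v ∂μ := by
          gcongr with y; exact e1 y
      _ = (v⁻¹ * v) * ∫⁻ y, (ENNReal.ofReal (l1 y) + ENNReal.ofReal (2 * η)) ∂μ := by
          rw [lintegral_mul_const _ (l1_measurable.ennreal_ofReal.add_const _)]; ring
      _ = _ := by
          rw [ENNReal.inv_mul_cancel hv0 hvtop, one_mul, lintegral_add_right _ measurable_const]
          simp [cost]
  · intro x
    simp only [f]
    calc _ ≤ v⁻¹ * 1 := by gcongr; exact prob_le_one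
      _ = _ := mul_one _
  · intro x t ht
    have := hdp (Metric.closedBall x η) measurableSet_closedBall t ht
    have himg : (fun y => y + t) '' Metric.closedBall x η = Metric.closedBall (x + t) η := by
      simp
    rw [himg] at this
    simp only [f]
    rw [mul_left_comm]
    gcongr
  · have := hton (fun _ => 1) measurable_const
    simp only [mul_one, lintegral_one, Measure.restrict_apply_univ, hvx] at this
    rw [this]
    simp [ENNReal.inv_mul_cancel hv0 hvtop]

/-- Lemma 7: the optimal cost V* equals the infimum over measures in 𝒫_i^{(c)},
i ≥ 3, i.e. measures in 𝒫_i^{(b)} whose density sequence additionally satisfies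
a₀ = e^ε · a_{i−1} and a₀ = a₁ = ⋯ = a_k for some 0 ≤ k ≤ i−2. -/
theorem Vstar_eq_inf_Pc (ε Δ : ℝ) (hε : 0 < ε) (hΔ : 0 < Δ) :
    (⨅ (μ : Measure (ℝ × ℝ)) (_ : MemP ε Δ μ), cost μ) =
    ⨅ (μ : Measure (ℝ × ℝ)) (_ : ∃ i : ℕ, 3 ≤ i ∧ MemPc ε Δ i μ), cost μ := by
  apply le_antisymm
  · refine le_iInf₂ fun μ hμ => ?_
    obtain ⟨i, _, hmem⟩ := hμ
    exact iInf₂_le μ hmem.1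
  · refine le_iInf₂ fun μ hμ => ?_
    apply ENNReal.le_of_forall_pos_le_add
    intro δ hδ _
    have := smooth ε Δ hε hΔ μ hμ (δ / 2) (by positivity)
    rwa [mul_div_cancel₀ _ (two_ne_zero), ENNReal.ofReal_coe_nnreal] at this
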